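/- arXiv:2405.04617 — 2 statements merged into one kernel-verified Lean document; each statement's English description precedes it below -/
import Mathlib

section
/- Let 𝒢 be a class of finite simple graphs closed under taking induced subgraphs (a hereditary class). Then there exists a function g : ℕ → ℕ such that every graph G ∈ 𝒢 satisfies tree-α(G) ≤ g(tree-μ(G)) if and only if there exists a positive integer t such that no graph in 𝒢 is isomorphic to K_{t,t}. -/
open SimpleGraph

/-- A tree decomposition of a (finite, simple) graph `G`: a finite tree `T` together with
bags `bag x ⊆ V` such that every vertex is in a bag, every edge is inside some bag, and for
every vertex the set of nodes whose bag contains it induces a connected subtree of `T`. -/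
structure TreeDecomp {V : Type} (G : SimpleGraph V) where
  ι : Type
  fintype_ι : Fintype ι
  T : SimpleGraph ι
  isTree : T.IsTree
  bag : ι → Set V
  mem_bag : ∀ v : V, ∃ x : ι, v ∈ bag x
  edge_bag : ∀ ⦃u v : V⦄, G.Adj u v → ∃ x : ι, u ∈ bag x ∧ v ∈ bag x
  bag_conn : ∀ v : V, (T.induce {x : ι | v ∈ bag x}).Connected

/-- `a`, `b` enumerate the endpoints of an induced matching of size `n` in `G`:
the edges `a i — b i` are present, and endpoints of distinct edges are pairwise distinct
and non-adjacent. -/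
def IsIndMatching {V : Type} (G : SimpleGraph V) {n : ℕ} (a b : Fin n → V) : Prop :=
  (∀ i, G.Adj (a i) (b i)) ∧
  ∀ i j : Fin n, i ≠ j →
    a i ≠ a j ∧ a i ≠ b j ∧ b i ≠ a j ∧ b i ≠ b j ∧
    ¬ G.Adj (a i) (a j) ∧ ¬ G.Adj (a i) (b j) ∧ ¬ G.Adj (b i) (a j) ∧ ¬ G.Adj (b i) (b j)

/-- `μ(T,β) ≤ μ`: every induced matching touching a bag of the decomposition has size at
most `μ`. -/
def TreeDecomp.MuLE {V : Type} {G : SimpleGraph V} (td : TreeDecomp G) (μ : ℕ) : Prop :=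
  ∀ (x : td.ι) (n : ℕ) (a b : Fin n → V),
    IsIndMatching G a b → (∀ i, a i ∈ td.bag x ∨ b i ∈ td.bag x) → n ≤ μ

/-- `α(T,β) ≤ k`: every independent set contained in a single bag has size at most `k`. -/
def TreeDecomp.AlphaLE {V : Type} {G : SimpleGraph V} (td : TreeDecomp G) (k : ℕ) : Prop :=
  ∀ (x : td.ι) (I : Finset V), ↑I ⊆ td.bag x →
    ((I : Set V)).Pairwise (fun u v => ¬ G.Adj u v) → I.card ≤ k

/-- The induced matching treewidth `tree-μ(G)`: the least `n` admitting a tree decomposition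
with `μ(T,β) ≤ n`. -/
noncomputable def treeMu {V : Type} (G : SimpleGraph V) : ℕ :=
  sInf {n | ∃ td : TreeDecomp G, td.MuLE n}

/-- The tree-independence number `tree-α(G)`: the least `n` admitting a tree decomposition
with `α(T,β) ≤ n`. -/
noncomputable def treeAlpha {V : Type} (G : SimpleGraph V) : ℕ :=
  sInf {n | ∃ td : TreeDecomp G, td.AlphaLE n}


section Helpers
open scoped Classical

/-- Independent finset. -/
def Indep {V : Type} (G : SimpleGraph V) (J : Finset V) : Prop :=
  ∀ u ∈ J, ∀ v ∈ J, ¬ G.Adj u v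

theorem Indep.mono {V : Type} {G : SimpleGraph V} {J K : Finset V} (h : Indep G K) (hs : J ⊆ K) :
    Indep G J := fun u hu v hv => h u (hs hu) v (hs hv)

/-- No induced balanced biclique. -/
def BFree {V : Type} (G : SimpleGraph V) (t : ℕ) : Prop :=
  ∀ P Q : Finset V, t ≤ P.card → t ≤ Q.card → Indep G P → Indep G Q →
    (∀ p ∈ P, ∀ q ∈ Q, G.Adj p q) → False

theorem bfree_of {V : Type} {G : SimpleGraph V} {t : ℕ}
    (h : IsEmpty (completeBipartiteGraph (Fin t) (Fin t) ↪g G)) : BFree G t := by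
  intro P Q hP hQ iP iQ hPQ
  obtain ⟨P', hP', cP⟩ := Finset.exists_subset_card_eq hP
  obtain ⟨Q', hQ', cQ⟩ := Finset.exists_subset_card_eq hQ
  have eP := (Finset.equivFinOfCardEq cP).symm
  have eQ := (Finset.equivFinOfCardEq cQ).symm
  refine h.false ⟨⟨Sum.elim (fun i => (eP i : V)) (fun i => (eQ i : V)), ?_⟩, ?_⟩
  · rintro (i | i) (j | j) hij
    · simp only [Sum.elim_inl] at hij
      rw [eP.injective (Subtype.ext hij)]
    · simp only [Sum.elim_inl, Sum.elim_inr] at hij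
      have := hPQ _ (hP' (eP i).2) _ (hQ' (eQ j).2)
      rw [hij] at this
      exact (this.ne rfl).elim
    · simp only [Sum.elim_inl, Sum.elim_inr] at hij
      have := hPQ _ (hP' (eP j).2) _ (hQ' (eQ i).2)
      rw [hij] at this
      exact (this.ne rfl).elim
    · simp only [Sum.elim_inr] at hij
      rw [eQ.injective (Subtype.ext hij)]
  · rintro (i | i) (j | j)
    · exact iff_of_false (iP _ (hP' (eP i).2) _ (hP' (eP j).2)) (by simp)
    · exact iff_of_true (hPQ _ (hP' (eP i).2) _ (hQ' (eQ j).2)) (by simp)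
    · exact iff_of_true (hPQ _ (hP' (eP j).2) _ (hQ' (eQ i).2)).symm (by simp)
    · exact iff_of_false (iQ _ (hQ' (eQ i).2) _ (hQ' (eQ j).2)) (by simp)

/-- Threshold for the greedy selection. -/
def Msel (t : ℕ) : ℕ → ℕ
  | 0 => 0
  | n + 1 => t * (n + 1) + t * Msel t n + t + 1

theorem select {V : Type} {G : SimpleGraph V} {t : ℕ} (hG : BFree G t) :
    ∀ (n : ℕ) (L : Finset V) (J : V → Finset V), L.card = n →
      (∀ i ∈ L, Indep G (J i) ∧ Msel t n ≤ (J i).card) →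
      ∃ f : V → V, ∀ i ∈ L, f i ∈ J i ∧ ∀ j ∈ L, ¬ G.Adj (f i) (f j) := by
  intro n
  induction n with
  | zero =>
    intro L J hL _
    rw [Finset.card_eq_zero] at hL
    subst hL
    exact ⟨id, by simp⟩
  | succ n ih =>
    intro L J hL hJ
    obtain ⟨a, L', ha, rfl, hL'⟩ := Finset.card_eq_succ.1 hL
    have hJa := hJ a (Finset.mem_insert_self _ _)
    let bad : V → Finset V := fun i =>
      (J a).filter fun j => ((J i).filter fun v => ¬ G.Adj j v).card < Msel t n
    have hbad : ∀ i ∈ L', (bad i).card ≤ t := by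
      intro i hi
      by_contra hlt
      push Not at hlt
      have hJi := hJ i (Finset.mem_insert_of_mem hi)
      obtain ⟨P, hP, cP⟩ := Finset.exists_subset_card_eq hlt.le
      refine hG P ((J i) \ P.biUnion fun p => (J i).filter fun v => ¬ G.Adj p v) cP.ge ?_
        (hJa.1.mono (hP.trans (Finset.filter_subset _ _))) (hJi.1.mono Finset.sdiff_subset) ?_
      · have h1 := Finset.le_card_sdiff (P.biUnion fun p => (J i).filter fun v => ¬ G.Adj p v) (J i)
        have h2 : (P.biUnion fun p => (J i).filter fun v => ¬ G.Adj p v).card ≤ P.card * Msel t n :=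
          Finset.card_biUnion_le_card_mul _ _ _ fun p hp =>
            (Finset.mem_filter.1 (hP hp)).2.le
        have h3 := hJi.2
        rw [cP] at h2
        simp only [Msel] at h3
        omega
      · intro p hp q hq
        simp only [Finset.mem_sdiff, Finset.mem_biUnion, Finset.mem_filter, not_exists, not_and,
          not_not] at hq
        exact hq.2 p hp hq.1
    have hex : ∃ j ∈ J a, j ∉ L'.biUnion bad := by
      by_contra hcon
      push Not at hcon
      have h1 := Finset.card_le_card (show J a ⊆ L'.biUnion bad from hcon)
      have h2 := Finset.card_biUnion_le_card_mul L' bad t hbad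
      have h3 := hJa.2
      simp only [Msel] at h3
      rw [hL'] at h2
      have : n * t ≤ t * (n + 1) := by nlinarith
      omega
    obtain ⟨j, hj, hjb⟩ := hex
    obtain ⟨f, hf⟩ := ih L' (fun i => (J i).filter fun v => ¬ G.Adj j v) hL' (by
      intro i hi
      refine ⟨(hJ i (Finset.mem_insert_of_mem hi)).1.mono (Finset.filter_subset _ _), ?_⟩
      by_contra hlt
      push Not at hlt
      exact hjb (Finset.mem_biUnion.2 ⟨i, hi, Finset.mem_filter.2 ⟨hj, hlt⟩⟩))
    refine ⟨Function.update f a j, ?_⟩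
    have hne : ∀ i ∈ L', Function.update f a j i = f i := fun i hi =>
      Function.update_of_ne (by rintro rfl; exact ha hi) _ _
    intro i hi
    rcases Finset.mem_insert.1 hi with rfl | hi'
    · rw [Function.update_self]
      refine ⟨hj, fun l hl => ?_⟩
      rcases Finset.mem_insert.1 hl with rfl | hl
      · simp
      · rw [hne l hl]
        exact (Finset.mem_filter.1 (hf l hl).1).2
    · rw [hne i hi']
      refine ⟨(Finset.mem_filter.1 (hf i hi').1).1, fun l hl => ?_⟩
      rcases Finset.mem_insert.1 hl with rfl | hl
      · rw [Function.update_self]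
        exact fun h => (Finset.mem_filter.1 (hf i hi').1).2 h.symm
      · rw [hne l hl]
        exact (hf i hi').2 l hl

theorem digraph_indep {α : Type} (r : α → α → Prop) (d : ℕ) :
    ∀ (n : ℕ) (S : Finset α), (∀ s ∈ S, (S.filter fun u => r s u).card ≤ d) →
      (2 * d + 1) * n ≤ S.card →
      ∃ S' ⊆ S, S'.card = n ∧ ∀ u ∈ S', ∀ v ∈ S', u ≠ v → ¬ r u v := by
  intro n
  induction n with
  | zero => intro S _ _; exact ⟨∅, by simp, by simp, by simp⟩
  | succ n ih =>
    intro S hS hc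
    have hex : ∃ s ∈ S, (S.filter fun u => r u s).card ≤ d := by
      by_contra hcon
      push Not at hcon
      have h1 := Finset.sum_card_bipartiteAbove_eq_sum_card_bipartiteBelow (s := S) (t := S) r
      have h2 : ∑ a ∈ S, (S.bipartiteAbove r a).card ≤ S.card * d := by
        rw [← smul_eq_mul]
        exact Finset.sum_le_card_nsmul _ _ _ hS
      have h3 : S.card * (d + 1) ≤ ∑ a ∈ S, (S.bipartiteBelow r a).card := by
        rw [← smul_eq_mul]
        exact Finset.card_nsmul_le_sum _ _ _ hcon
      have : 0 < S.card := by nlinarith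
      nlinarith
    obtain ⟨s, hs, hin⟩ := hex
    let R := insert s ((S.filter fun u => r s u) ∪ (S.filter fun u => r u s))
    have hR : R.card ≤ 2 * d + 1 := by
      have h1 := Finset.card_insert_le s ((S.filter fun u => r s u) ∪ (S.filter fun u => r u s))
      have h2 := Finset.card_union_le (S.filter fun u => r s u) (S.filter fun u => r u s)
      have h3 := hS s hs
      simp only [R]
      omega
    obtain ⟨S', hS', hc', hr⟩ := ih (S \ R) (by
      intro u hu
      exact (Finset.card_le_card (Finset.filter_subset_filter _ Finset.sdiff_subset)).trans
        (hS u (Finset.sdiff_subset hu))) (by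
      have := Finset.le_card_sdiff R S
      have : (2 * d + 1) * (n + 1) = (2 * d + 1) * n + (2 * d + 1) := by ring
      omega)
    have hout : ∀ v ∈ S', v ∈ S ∧ v ≠ s ∧ ¬ r s v ∧ ¬ r v s := by
      intro v hv
      have := hS' hv
      simp only [R, Finset.mem_sdiff, Finset.mem_insert, Finset.mem_union, Finset.mem_filter] at this
      tauto
    refine ⟨insert s S', ?_, ?_, ?_⟩
    · intro v hv
      rcases Finset.mem_insert.1 hv with rfl | hv
      · exact hs
      · exact (hout v hv).1
    · rw [Finset.card_insert_of_notMem (fun h => (hout s h).2.1 rfl), hc']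
    · intro u hu v hv huv
      rcases Finset.mem_insert.1 hu with rfl | hu' <;> rcases Finset.mem_insert.1 hv with rfl | hv'
      · exact (huv rfl).elim
      · exact (hout v hv').2.2.1
      · exact (hout u hu').2.2.2
      · exact hr u hu' v hv' huv

/-- finset form of induced matchings touching a bag -/
theorem matching_le {V : Type} {G : SimpleGraph V} {td : TreeDecomp G} {k : ℕ} (hk : td.MuLE k)
    (x : td.ι) (S : Finset V) (f : V → V) (hadj : ∀ s ∈ S, G.Adj s (f s))
    (hb : ∀ s ∈ S, s ∈ td.bag x ∨ f s ∈ td.bag x) (hS : Indep G S)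
    (hf : ∀ s ∈ S, ∀ u ∈ S, ¬ G.Adj (f s) (f u))
    (hsf : ∀ s ∈ S, ∀ u ∈ S, s ≠ u → ¬ G.Adj s (f u)) : S.card ≤ k := by
  have e := S.equivFin.symm
  refine hk x S.card (fun i => (e i : V)) (fun i => f (e i)) ⟨fun i => hadj _ (e i).2, ?_⟩
    fun i => hb _ (e i).2
  intro i j hij
  have hne : (e i : V) ≠ e j := fun h => hij (e.injective (Subtype.ext h))
  refine ⟨hne, ?_, ?_, ?_, hS _ (e i).2 _ (e j).2, hsf _ (e i).2 _ (e j).2 hne, ?_,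
    hf _ (e i).2 _ (e j).2⟩
  · intro h
    dsimp only at h
    have := hadj _ (e j).2
    rw [← h] at this
    exact hS _ (e j).2 _ (e i).2 this
  · intro h
    dsimp only at h
    have := hadj _ (e i).2
    rw [h] at this
    exact hS _ (e i).2 _ (e j).2 this
  · intro h
    dsimp only at h
    have := hadj _ (e i).2
    rw [h] at this
    exact hsf _ (e i).2 _ (e j).2 hne this
  · intro h
    exact hsf _ (e j).2 _ (e i).2 hne.symm h.symm

/-- An independent set dominated by an independent set of vertices of small degree to it. -/
theorem dominated_le {V : Type} {G : SimpleGraph V} {td : TreeDecomp G} {k : ℕ} (hk : td.MuLE k)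
    (x : td.ι) (m : ℕ) (J U : Finset V) (hJ : Indep G J) (hU : Indep G U)
    (hdom : ∀ j ∈ J, ∃ u ∈ U, G.Adj u j)
    (hdeg : ∀ u ∈ U, (J.filter fun j => G.Adj u j).card ≤ m)
    (hb : ∀ u ∈ U, ∀ j ∈ J, G.Adj u j → u ∈ td.bag x ∨ j ∈ td.bag x) : J.card ≤ k * m := by
  obtain ⟨D, hD, hmin⟩ := Finset.exists_min_image
    (U.powerset.filter fun D => ∀ j ∈ J, ∃ u ∈ D, G.Adj u j) Finset.card
    ⟨U, by simpa using hdom⟩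
  simp only [Finset.mem_filter, Finset.mem_powerset] at hD hmin
  obtain ⟨hDU, hDd⟩ := hD
  have hpriv : ∀ d ∈ D, ∃ j ∈ J, G.Adj d j ∧ ∀ u ∈ D, u ≠ d → ¬ G.Adj u j := by
    intro d hd
    by_contra hcon
    push Not at hcon
    have := hmin (D.erase d) ⟨(Finset.erase_subset _ _).trans hDU, by
      intro j hj
      obtain ⟨u, hu, huj⟩ := hDd j hj
      by_cases hud : u = d
      · subst hud
        obtain ⟨w, hw, hwd, hwj⟩ := hcon j hj huj
        exact ⟨w, Finset.mem_erase.2 ⟨hwd, hw⟩, hwj⟩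
      · exact ⟨u, Finset.mem_erase.2 ⟨hud, hu⟩, huj⟩⟩
    have := Finset.card_erase_lt_of_mem hd
    omega
  choose! p hp using hpriv
  have h1 : D.card ≤ k := matching_le hk x D p (fun d hd => (hp d hd).2.1)
    (fun d hd => hb d (hDU hd) _ (hp d hd).1 (hp d hd).2.1) (hU.mono hDU)
    (fun s hs u hu => hJ _ (hp s hs).1 _ (hp u hu).1)
    (fun s hs u hu hne => (hp u hu).2.2 s hs hne)
  have h2 : J.card ≤ D.card * m := by
    refine (Finset.card_le_card ?_).trans (Finset.card_biUnion_le_card_mul D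
      (fun d => J.filter fun j => G.Adj d j) m fun d hd => hdeg d (hDU hd))
    intro j hj
    obtain ⟨u, hu, huj⟩ := hDd j hj
    exact Finset.mem_biUnion.2 ⟨u, hu, Finset.mem_filter.2 ⟨hj, huj⟩⟩
  exact h2.trans (Nat.mul_le_mul_right _ h1)

/-- Independent sets of high vertices inside a bag are small. -/
theorem high_le {V : Type} {G : SimpleGraph V} {td : TreeDecomp G} {k t m : ℕ} (hk : td.MuLE k)
    (hG : BFree G t) (x : td.ι)
    (hm : 2 ^ ((2 * t + 1) * (k + 1)) * t + Msel t ((2 * t + 1) * (k + 1)) ≤ m)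
    (Z : Finset V) (hZ : Indep G Z) (hZx : ∀ z ∈ Z, z ∈ td.bag x)
    (hhigh : ∀ z ∈ Z, ∃ J : Finset V, Indep G J ∧ m ≤ J.card ∧ ∀ j ∈ J, G.Adj z j) :
    Z.card ≤ (2 * t + 1) * (k + 1) := by
  by_contra hlt
  push Not at hlt
  obtain ⟨Y, hYZ, hY⟩ := Finset.exists_subset_card_eq hlt.le
  have hhigh' : ∀ z ∈ Y, ∃ J : Finset V, Indep G J ∧ m ≤ J.card ∧ ∀ j ∈ J, G.Adj z j :=
    fun z hz => hhigh z (hYZ hz)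
  choose! J hJ using hhigh'
  let J' : V → Finset V := fun z => (J z).filter fun j => (Y.filter fun y => G.Adj j y).card ≤ t
  have hJ' : ∀ z ∈ Y, Indep G (J' z) ∧ Msel t ((2 * t + 1) * (k + 1)) ≤ (J' z).card := by
    intro z hz
    refine ⟨(hJ z hz).1.mono (Finset.filter_subset _ _), ?_⟩
    by_contra hc
    push Not at hc
    have hsum := Finset.card_filter_add_card_filter_not (s := J z)
      (fun j => (Y.filter fun y => G.Adj j y).card ≤ t)
    have hJz := (hJ z hz).2.1
    obtain ⟨W, hW, hcard⟩ := Finset.exists_lt_card_fiber_of_mul_lt_card_of_maps_to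
      (s := (J z).filter fun j => ¬ (Y.filter fun y => G.Adj j y).card ≤ t) (t := Y.powerset)
      (f := fun j => Y.filter fun y => G.Adj j y) (n := t)
      (by intro a _; simp) (by
        rw [Finset.card_powerset, hY]
        simp only [J'] at hc
        omega)
    have hne : (((J z).filter fun j => ¬ (Y.filter fun y => G.Adj j y).card ≤ t).filter
      fun j => (Y.filter fun y => G.Adj j y) = W).Nonempty := by
      rw [← Finset.card_pos]; omega
    obtain ⟨j0, hj0⟩ := hne
    simp only [Finset.mem_filter] at hj0
    refine hG _ W hcard.le ?_ ((hJ z hz).1.mono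
      ((Finset.filter_subset _ _).trans (Finset.filter_subset _ _)))
      (hZ.mono ((Finset.mem_powerset.1 hW).trans hYZ)) ?_
    · rw [← hj0.2]; omega
    · intro p hp q hq
      simp only [Finset.mem_filter] at hp
      rw [← hp.2] at hq
      exact (Finset.mem_filter.1 hq).2
  obtain ⟨f, hf⟩ := select hG _ Y J' hY hJ'
  obtain ⟨S, hSY, hS, hr⟩ := digraph_indep (fun s u => G.Adj (f s) u) t (k + 1) Y
    (fun s hs => (Finset.mem_filter.1 (hf s hs).1).2) hY.ge
  have := matching_le hk x S f
    (fun s hs => (hJ s (hSY hs)).2.2 _ (Finset.mem_filter.1 (hf s (hSY hs)).1).1)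
    (fun s hs => Or.inl (hZx s (hYZ (hSY hs)))) (hZ.mono (hSY.trans hYZ))
    (fun s hs u hu => (hf s (hSY hs)).2 u (hSY hu))
    (fun s hs u hu hne h => hr u hu s hs hne.symm h.symm)
  omega

/-- Attach one new leaf to `p i` for every `i`. -/
def leafGraph {ι κ : Type} (T : SimpleGraph ι) (p : κ → ι) : SimpleGraph (ι ⊕ κ) where
  Adj a b := match a, b with
    | .inl x, .inl y => T.Adj x y
    | .inl x, .inr i => x = p i
    | .inr i, .inl x => x = p i
    | .inr _, .inr _ => False
  symm := ⟨by
    rintro (x | i) (y | j) h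
    · exact h.symm
    · exact h
    · exact h
    · exact h⟩
  loopless := ⟨by
    rintro (x | i) h
    · exact T.irrefl h
    · exact h⟩

theorem leaf_reach {ι κ : Type} {T : SimpleGraph ι} {p : κ → ι} {C : Set ι} {D : Set (ι ⊕ κ)}
    (hC : (T.induce C).Connected) (hCD : ∀ x ∈ C, Sum.inl x ∈ D) {x y : ι} (hx : x ∈ C)
    (hy : y ∈ C) : ((leafGraph T p).induce D).Reachable ⟨Sum.inl x, hCD x hx⟩
      ⟨Sum.inl y, hCD y hy⟩ := by
  let φ : T.induce C →g (leafGraph T p).induce D :=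
    ⟨fun z => ⟨Sum.inl z.1, hCD _ z.2⟩, fun {a b} h => h⟩
  exact (hC.preconnected ⟨x, hx⟩ ⟨y, hy⟩).map φ

theorem leafGraph_isTree {ι κ : Type} [Finite ι] [Finite κ] {T : SimpleGraph ι} (hT : T.IsTree)
    (p : κ → ι) : (leafGraph T p).IsTree := by
  have hconn : (leafGraph T p).Connected := by
    rw [connected_iff_exists_forall_reachable]
    obtain ⟨x0⟩ := hT.connected.nonempty
    have h1 : ∀ x, (leafGraph T p).Reachable (Sum.inl x0) (Sum.inl x) := by
      intro x
      let φ : T →g leafGraph T p := ⟨Sum.inl, fun {a b} h => h⟩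
      exact (hT.connected.preconnected x0 x).map φ
    refine ⟨Sum.inl x0, ?_⟩
    rintro (x | i)
    · exact h1 x
    · exact (h1 (p i)).trans (Adj.reachable (show (leafGraph T p).Adj _ _ from rfl))
  rw [isTree_iff_connected_and_card]
  refine ⟨hconn, le_antisymm ?_ hconn.card_vert_le_card_edgeSet_add_one⟩
  have hT' := (isTree_iff_connected_and_card.1 hT).2
  have hsub : (leafGraph T p).edgeSet ⊆ (Sym2.map Sum.inl '' T.edgeSet) ∪
      Set.range (fun i => s(Sum.inl (p i), Sum.inr i)) := by
    intro e
    induction e using Sym2.ind with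
    | _ a b =>
      intro h
      rw [mem_edgeSet] at h
      rcases a with x | i <;> rcases b with y | j
      · exact Or.inl ⟨s(x, y), h, rfl⟩
      · have h' : x = p j := h
        exact Or.inr ⟨j, by rw [h']⟩
      · have h' : y = p i := h
        exact Or.inr ⟨i, by rw [h', Sym2.eq_swap]⟩
      · exact h.elim
  have h1 := Set.ncard_le_ncard hsub (Set.toFinite _)
  have h2 := Set.ncard_union_le (Sym2.map (Sum.inl : ι → ι ⊕ κ) '' T.edgeSet)
      (Set.range (fun i => s(Sum.inl (p i), Sum.inr i)))
  have h3 := Set.ncard_image_le (f := Sym2.map (Sum.inl : ι → ι ⊕ κ)) (Set.toFinite T.edgeSet)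
  have h4 : (Set.range (fun i => (s(Sum.inl (p i), Sum.inr i) : Sym2 (ι ⊕ κ)))).ncard
      ≤ Nat.card κ := by
    rw [← Set.image_univ, ← Set.ncard_univ]
    exact Set.ncard_image_le (Set.toFinite _)
  rw [Nat.card_sum, ← hT']
  simp only [Nat.card_coe_set_eq] at *
  omega

/-- The new decomposition. -/
noncomputable def newTD {V : Type} [Fintype V] {G : SimpleGraph V} (td : TreeDecomp G)
    (I : Set V) (hI : ∀ u ∈ I, ∀ v ∈ I, ¬ G.Adj u v) : TreeDecomp G where
  ι := td.ι ⊕ I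
  fintype_ι := by haveI := td.fintype_ι; infer_instance
  T := leafGraph td.T (fun i : I => (td.mem_bag i).choose)
  isTree := by haveI := td.fintype_ι; exact leafGraph_isTree td.isTree _
  bag := Sum.elim (fun x => {v | v ∉ I ∧ (v ∈ td.bag x ∨ ∃ i ∈ I, G.Adj v i ∧ i ∈ td.bag x)})
    (fun i => {v | v = i ∨ G.Adj v i})
  mem_bag v := by
    by_cases hv : v ∈ I
    · exact ⟨Sum.inr ⟨v, hv⟩, Or.inl rfl⟩
    · obtain ⟨x, hx⟩ := td.mem_bag v
      exact ⟨Sum.inl x, hv, Or.inl hx⟩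
  edge_bag u v h := by
    by_cases hu : u ∈ I
    · exact ⟨Sum.inr ⟨u, hu⟩, Or.inl rfl, Or.inr h.symm⟩
    · by_cases hv : v ∈ I
      · exact ⟨Sum.inr ⟨v, hv⟩, Or.inr h, Or.inl rfl⟩
      · obtain ⟨x, hx, hx'⟩ := td.edge_bag h
        exact ⟨Sum.inl x, ⟨hu, Or.inl hx⟩, ⟨hv, Or.inl hx'⟩⟩
  bag_conn v := by
    rw [connected_iff_exists_forall_reachable]
    by_cases hv : v ∈ I
    · refine ⟨⟨Sum.inr ⟨v, hv⟩, Or.inl rfl⟩, ?_⟩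
      rintro ⟨x | i, hx⟩
      · exact (hx.1 hv).elim
      · rcases hx with hx | hx
        · have : i = ⟨v, hv⟩ := Subtype.ext hx.symm
          subst this
          exact Reachable.refl _
        · exact (hI v hv i i.2 hx).elim
    · obtain ⟨x0, hx0⟩ := td.mem_bag v
      refine ⟨⟨Sum.inl x0, hv, Or.inl hx0⟩, ?_⟩
      let D : Set (td.ι ⊕ (I : Set V)) := {y | v ∈ Sum.elim (fun x => {v | v ∉ I ∧ (v ∈ td.bag x ∨
              ∃ i ∈ I, G.Adj v i ∧ i ∈ td.bag x)}) (fun i : I => {v | v = i ∨ G.Adj v i}) y}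
      have key : ∀ (x : td.ι) (hx : v ∈ td.bag x ∨ ∃ i ∈ I, G.Adj v i ∧ i ∈ td.bag x),
          ((leafGraph td.T (fun i : I => (td.mem_bag i).choose)).induce D).Reachable
            ⟨Sum.inl x0, hv, Or.inl hx0⟩ ⟨Sum.inl x, hv, hx⟩ := by
        have hD1 : ∀ z ∈ {x | v ∈ td.bag x}, Sum.inl z ∈ D := fun z hz => ⟨hv, Or.inl hz⟩
        intro x hx
        rcases hx with hx | ⟨i, hi, hvi, hix⟩
        · exact leaf_reach (td.bag_conn v) hD1 hx0 hx
        · obtain ⟨x1, hvx1, hix1⟩ := td.edge_bag hvi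
          have hD2 : ∀ z ∈ {x | i ∈ td.bag x}, Sum.inl z ∈ D :=
            fun z hz => ⟨hv, Or.inr ⟨i, hi, hvi, hz⟩⟩
          exact (leaf_reach (td.bag_conn v) hD1 hx0 hvx1).trans
            (leaf_reach (td.bag_conn i) hD2 hix1 hix)
      rintro ⟨x | i, hx⟩
      · exact key x hx.2
      · rcases hx with hx | hx
        · exact (hv (hx ▸ i.2)).elim
        · refine (key (td.mem_bag i).choose
            (Or.inr ⟨i, i.2, hx, (td.mem_bag i).choose_spec⟩)).trans (Adj.reachable ?_)
          exact (rfl : (td.mem_bag i).choose = (td.mem_bag i).choose)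

theorem pairwise_indep {V : Type} {G : SimpleGraph V} {J : Finset V}
    (h : (J : Set V).Pairwise fun u v => ¬ G.Adj u v) : Indep G J := by
  intro u hu v hv huv
  exact h hu hv huv.ne huv

/-- The bound. -/
def bnd (t k : ℕ) : ℕ :=
  let B := (2 * t + 1) * (k + 1)
  let m := 2 ^ B * t + Msel t B
  2 * (k * m) + B + m + 1

theorem alpha_of_mu {V : Type} [Fintype V] {G : SimpleGraph V} {t k : ℕ} (hG : BFree G t)
    (td : TreeDecomp G) (hk : td.MuLE k) : ∃ td' : TreeDecomp G, td'.AlphaLE (bnd t k) := by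
  obtain ⟨B, hB⟩ : ∃ B, B = (2 * t + 1) * (k + 1) := ⟨_, rfl⟩
  obtain ⟨m, hm⟩ : ∃ m, m = 2 ^ B * t + Msel t B := ⟨_, rfl⟩
  have hbnd : bnd t k = 2 * (k * m) + B + m + 1 := by simp only [bnd, hm, hB]
  let H : V → Prop := fun z => ∃ J : Finset V, Indep G J ∧ m ≤ J.card ∧ ∀ j ∈ J, G.Adj z j
  obtain ⟨I, hI, hmax⟩ := Finset.exists_max_image
    ((Finset.univ : Finset (Finset V)).filter fun I => Indep G I ∧ ∀ i ∈ I, ¬ H i) Finset.card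
    ⟨∅, Finset.mem_filter.2 ⟨Finset.mem_univ _, fun u hu => absurd hu (by simp),
      fun u hu => absurd hu (by simp)⟩⟩
  simp only [Finset.mem_filter, Finset.mem_univ, true_and] at hI hmax
  have hlow : ∀ i ∈ I, ∀ J : Finset V, Indep G J → (∀ j ∈ J, G.Adj i j) → J.card ≤ m := by
    intro i hi J hJ hJi
    by_contra hlt
    exact hI.2 i hi ⟨J, hJ, by omega, hJi⟩
  have hdomI : ∀ v, v ∉ I → ¬ H v → ∃ i ∈ I, G.Adj i v := by
    intro v hv hvH
    by_contra hcon
    push Not at hcon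
    have := hmax (insert v I) ⟨by
      intro a ha b hb
      rcases Finset.mem_insert.1 ha with rfl | ha' <;> rcases Finset.mem_insert.1 hb with rfl | hb'
      · simp
      · exact fun h => hcon b hb' h.symm
      · exact hcon a ha'
      · exact hI.1 a ha' b hb', by
      intro a ha
      rcases Finset.mem_insert.1 ha with rfl | ha'
      · exact hvH
      · exact hI.2 a ha'⟩
    rw [Finset.card_insert_of_notMem hv] at this
    omega
  refine ⟨newTD td (I : Set V) (fun u hu v hv => hI.1 u hu v hv), ?_⟩
  rw [hbnd]
  rintro (x | i) J hJx hJ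
  · have hJi := pairwise_indep hJ
    have hJx' : ∀ j ∈ J, j ∉ I ∧ (j ∈ td.bag x ∨ ∃ i ∈ I, G.Adj j i ∧ i ∈ td.bag x) :=
      fun j hj => hJx hj
    let J1 := J.filter fun j => ∃ i ∈ I, G.Adj j i ∧ i ∈ td.bag x
    let J2 := J.filter fun j => j ∈ td.bag x ∧ ¬ H j
    let J3 := J.filter fun j => j ∈ td.bag x ∧ H j
    have hc : J ⊆ J1 ∪ J2 ∪ J3 := by
      intro j hj
      simp only [J1, J2, J3, Finset.mem_union, Finset.mem_filter]
      rcases (hJx' j hj).2 with h | h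
      · by_cases hH : H j
        · exact Or.inr ⟨hj, h, hH⟩
        · exact Or.inl (Or.inr ⟨hj, h, hH⟩)
      · exact Or.inl (Or.inl ⟨hj, h⟩)
    have hs1 : J1 ⊆ J := Finset.filter_subset _ _
    have hs2 : J2 ⊆ J := Finset.filter_subset _ _
    have hs3 : J3 ⊆ J := Finset.filter_subset _ _
    have hdeg : ∀ J' ⊆ J, ∀ u ∈ I, (J'.filter fun j => G.Adj u j).card ≤ m := by
      intro J' hJ' u hu
      exact hlow u hu _ (hJi.mono ((Finset.filter_subset _ _).trans hJ'))
        fun j hj => (Finset.mem_filter.1 hj).2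
    have h1 : J1.card ≤ k * m := by
      refine dominated_le hk x m J1 (I.filter fun i => i ∈ td.bag x) (hJi.mono hs1)
        (hI.1.mono (Finset.filter_subset _ _)) ?_
        (fun u hu => hdeg J1 hs1 u (Finset.mem_filter.1 hu).1)
        (fun u hu _ _ _ => Or.inl (Finset.mem_filter.1 hu).2)
      intro j hj
      obtain ⟨i, hi, hji, hix⟩ := (Finset.mem_filter.1 hj).2
      exact ⟨i, Finset.mem_filter.2 ⟨hi, hix⟩, hji.symm⟩
    have h2 : J2.card ≤ k * m := by
      refine dominated_le hk x m J2 I (hJi.mono hs2) hI.1 ?_ (hdeg J2 hs2)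
        (fun u hu j hj _ => Or.inr (Finset.mem_filter.1 hj).2.1)
      intro j hj
      exact hdomI j (hJx' j (hs2 hj)).1 (Finset.mem_filter.1 hj).2.2
    have h3 : J3.card ≤ B := by
      rw [hB]
      refine high_le (m := m) hk hG x (by rw [hm, hB]) J3 (hJi.mono hs3) ?_ ?_
      · exact fun z hz => (Finset.mem_filter.1 hz).2.1
      · exact fun z hz => (Finset.mem_filter.1 hz).2.2
    have h4 := Finset.card_le_card hc
    have h5 := Finset.card_union_le (J1 ∪ J2) J3
    have h6 := Finset.card_union_le J1 J2
    omega
  · have hJi := pairwise_indep hJ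
    have hJx' : ∀ j ∈ J, j = i ∨ G.Adj j i := fun j hj => hJx hj
    have h1 := hlow i i.2 (J.erase i) (hJi.mono (Finset.erase_subset _ _)) (by
      intro j hj
      obtain ⟨hne, hj⟩ := Finset.mem_erase.1 hj
      exact ((hJx' j hj).resolve_left hne).symm)
    have h2 := Finset.pred_card_le_card_erase (s := J) (a := (i : V))
    omega

/-- The one-bag decomposition. -/
def trivTD {V : Type} (G : SimpleGraph V) : TreeDecomp G where
  ι := Unit
  fintype_ι := inferInstance
  T := ⊥
  isTree := IsTree.of_subsingleton
  bag := fun _ => Set.univ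
  mem_bag v := ⟨(), trivial⟩
  edge_bag u v _ := ⟨(), trivial, trivial⟩
  bag_conn v := by
    haveI : Nonempty {x : Unit | v ∈ (Set.univ : Set V)} := ⟨⟨(), trivial⟩⟩
    exact (IsTree.of_subsingleton).connected

theorem treeMu_spec {V : Type} [Fintype V] (G : SimpleGraph V) :
    ∃ td : TreeDecomp G, td.MuLE (treeMu G) := by
  refine Nat.sInf_mem (s := {n | ∃ td : TreeDecomp G, td.MuLE n})
    ⟨Fintype.card V, trivTD G, ?_⟩
  intro x n a b h _
  have : Function.Injective a := by
    intro i j hij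
    by_contra hne
    exact (h.2 i j hne).1 hij
  simpa using Fintype.card_le_of_injective a this

theorem treeAlpha_spec {V : Type} [Fintype V] (G : SimpleGraph V) :
    ∃ td : TreeDecomp G, td.AlphaLE (treeAlpha G) :=
  Nat.sInf_mem (s := {n | ∃ td : TreeDecomp G, td.AlphaLE n})
    ⟨Fintype.card V, trivTD G, fun _ I _ _ => Finset.card_le_univ I⟩

theorem top_lemma {ι : Type} {T : SimpleGraph ι} (hT : T.IsTree) (r : ι) (C : Set ι)
    (hC : (T.induce C).Connected) : ∃ w ∈ C, ∀ y ∈ C, ∀ p : T.Walk r y, p.IsPath →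
      w ∈ p.support ∧ ∀ u ∈ p.support, u ∈ C ∨ T.dist r u < T.dist r w := by
  obtain ⟨⟨c, hc⟩⟩ := hC.nonempty
  have hne : (T.dist r '' C).Nonempty := ⟨_, c, hc, rfl⟩
  obtain ⟨w, hw, hwd⟩ := Nat.sInf_mem hne
  have hmin : ∀ u ∈ C, T.dist r w ≤ T.dist r u := by
    intro u hu
    rw [hwd]
    exact Nat.sInf_le ⟨u, hu, rfl⟩
  refine ⟨w, hw, ?_⟩
  intro y hy p hp
  obtain ⟨P, hP, hPl⟩ := hT.connected.exists_path_of_dist r w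
  obtain ⟨Q0, hQ0⟩ := (hC.preconnected ⟨w, hw⟩ ⟨y, hy⟩).exists_isPath
  let φ : T.induce C →g T := ⟨Subtype.val, fun {a b} h => h⟩
  let Q : T.Walk w y := Q0.map φ
  have hQ : Q.IsPath := Walk.map_isPath_of_injective Subtype.val_injective hQ0
  have hQC : ∀ u ∈ Q.support, u ∈ C := by
    intro u hu
    simp only [Q, Walk.support_map, List.mem_map] at hu
    obtain ⟨z, _, rfl⟩ := hu
    exact z.2
  have hPlt : ∀ u ∈ P.support, u ≠ w → T.dist r u < T.dist r w := by
    intro u hu hne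
    rw [← hPl]
    exact (dist_le _).trans_lt (Walk.length_takeUntil_lt_length hu hne)
  have hPQ : (P.append Q).IsPath := by
    rw [Walk.isPath_def, Walk.support_append, List.nodup_append]
    refine ⟨hP.support_nodup, hQ.support_nodup.tail, ?_⟩
    intro a ha b hb hab
    subst hab
    have haC := hQC a (List.mem_of_mem_tail hb)
    by_cases haw : a = w
    · subst haw
      have := hQ.support_nodup
      rw [Walk.support_eq_cons] at this
      exact (List.nodup_cons.1 this).1 hb
    · have := hPlt a ha haw
      have := hmin a haC
      omega
  have hpe : p = P.append Q := (hT.existsUnique_path r y).unique hp hPQ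
  subst hpe
  refine ⟨by simp, ?_⟩
  intro u hu
  rw [Walk.mem_support_append_iff] at hu
  rcases hu with hu | hu
  · by_cases huw : u = w
    · exact Or.inl (huw ▸ hw)
    · exact Or.inr (hPlt u hu huw)
  · exact Or.inl (hQC u hu)

theorem biclique_alpha (t : ℕ) (ht : 0 < t) :
    t ≤ treeAlpha (completeBipartiteGraph (Fin t) (Fin t)) := by
  obtain ⟨td, htd⟩ := treeAlpha_spec (completeBipartiteGraph (Fin t) (Fin t))
  obtain ⟨r⟩ := td.isTree.connected.nonempty
  have htop := fun v => top_lemma td.isTree r _ (td.bag_conn v)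
  choose w hw hw' using htop
  haveI : Nonempty (Fin t ⊕ Fin t) := ⟨Sum.inl ⟨0, ht⟩⟩
  obtain ⟨v0, hv0⟩ := Finite.exists_max (fun v => td.T.dist r (w v))
  have key : ∀ v, (completeBipartiteGraph (Fin t) (Fin t)).Adj v0 v → v ∈ td.bag (w v0) := by
    intro v hv
    obtain ⟨y, hy0, hy⟩ := td.edge_bag hv
    obtain ⟨p, hp, -⟩ := td.isTree.existsUnique_path r y
    have h1 := (hw' v0 y hy0 p hp).1
    rcases (hw' v y hy p hp).2 _ h1 with h | h
    · exact h
    · exact absurd h (not_lt.2 (hv0 v))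
  rcases v0 with a | b
  · have := htd (w (Sum.inl a)) (Finset.univ.map ⟨Sum.inr, Sum.inr_injective⟩) (by
      intro v hv
      simp only [Finset.coe_map, Set.mem_image] at hv
      obtain ⟨j, -, rfl⟩ := hv
      exact key _ (by simp)) (by
      intro u hu v hv _
      simp only [Finset.coe_map, Set.mem_image] at hu hv
      obtain ⟨i, -, rfl⟩ := hu
      obtain ⟨j, -, rfl⟩ := hv
      simp)
    simpa using this
  · have := htd (w (Sum.inr b)) (Finset.univ.map ⟨Sum.inl, Sum.inl_injective⟩) (by
      intro v hv
      simp only [Finset.coe_map, Set.mem_image] at hv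
      obtain ⟨j, -, rfl⟩ := hv
      exact key _ (by simp)) (by
      intro u hu v hv _
      simp only [Finset.coe_map, Set.mem_image] at hu hv
      obtain ⟨i, -, rfl⟩ := hu
      obtain ⟨j, -, rfl⟩ := hv
      simp)
    simpa using this

theorem biclique_mu (t : ℕ) : treeMu (completeBipartiteGraph (Fin t) (Fin t)) ≤ 1 := by
  refine Nat.sInf_le ⟨trivTD _, ?_⟩
  intro x n a b h _
  by_contra hn
  push Not at hn
  have h0 := h.1 ⟨0, by omega⟩
  have h1 := h.1 ⟨1, hn⟩
  have h2 := (h.2 ⟨0, by omega⟩ ⟨1, hn⟩ (by simp)).2.2.2.2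
  revert h0 h1 h2
  generalize a ⟨0, _⟩ = a0
  generalize a ⟨1, _⟩ = a1
  generalize b ⟨0, _⟩ = b0
  generalize b ⟨1, _⟩ = b1
  rcases a0 with _ | _ <;> rcases a1 with _ | _ <;> rcases b0 with _ | _ <;>
    rcases b1 with _ | _ <;> simp

end Helpers

/-- For a hereditary class `𝒢` of finite graphs (closed under induced subgraphs, hence also
under isomorphism), `tree-α` is bounded by a function of `tree-μ` on `𝒢` if and only if some
biclique `K_{t,t}` is absent from `𝒢`. -/
theorem stmt2 (𝒢 : ∀ (V : Type), Fintype V → SimpleGraph V → Prop)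
    (hher : ∀ (V W : Type) (iV : Fintype V) (iW : Fintype W)
      (G : SimpleGraph V) (H : SimpleGraph W), 𝒢 V iV G → (H ↪g G) → 𝒢 W iW H) :
    (∃ g : ℕ → ℕ, ∀ (V : Type) (iV : Fintype V) (G : SimpleGraph V),
        𝒢 V iV G → treeAlpha G ≤ g (treeMu G)) ↔
    (∃ t : ℕ, 0 < t ∧ ∀ (V : Type) (iV : Fintype V) (G : SimpleGraph V),
        𝒢 V iV G → IsEmpty (G ≃g completeBipartiteGraph (Fin t) (Fin t))) := by
  constructor
  · rintro ⟨g, hg⟩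
    by_contra hcon
    push Not at hcon
    obtain ⟨V, iV, G, hGc, hiso⟩ := hcon (g 0 + g 1 + 1) (by omega)
    obtain ⟨e⟩ := hiso
    have hK := hher V _ iV inferInstance G _ hGc e.symm.toEmbedding
    have h1 := hg _ _ _ hK
    have h2 := biclique_alpha (g 0 + g 1 + 1) (by omega)
    have h3 := biclique_mu (g 0 + g 1 + 1)
    have h4 : g (treeMu (completeBipartiteGraph (Fin (g 0 + g 1 + 1)) (Fin (g 0 + g 1 + 1))))
        ≤ g 0 + g 1 := by
      rcases Nat.le_one_iff_eq_zero_or_eq_one.1 h3 with h | h <;> rw [h] <;> omega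
    omega
  · rintro ⟨t, ht, hfree⟩
    refine ⟨bnd t, fun V iV G hGc => ?_⟩
    obtain ⟨td, htd⟩ := treeMu_spec G
    have hB : BFree G t := bfree_of ⟨fun φ =>
      (hfree _ _ _ (hher V _ iV inferInstance G _ hGc φ)).false (RelIso.refl _)⟩
    exact Nat.sInf_le (alpha_of_mu hB td htd)
end

section
/- Let μ and t be positive integers, let G be a finite simple K_{t,t}-free graph, let (T, β) be a tree decomposition of G with μ(T, β) ≤ μ, and let S be a maximum independent set in G. Then for every node x of T, the maximum size of an independent set of G contained in β(x) \ S is strictly less than R(2t, 2t, μ+1). -/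
open SimpleGraph

/-- `n` is large enough for the multicolour Ramsey property with target sizes `t`:
every `k`-colouring of the edges of the complete graph on `n` vertices admits, for some
colour `i`, a set of `t i` vertices all of whose connecting edges have colour `i`. -/
def RamseyProp (n : ℕ) {k : ℕ} (t : Fin k → ℕ) : Prop :=
  ∀ c : Sym2 (Fin n) → Fin k, ∃ (i : Fin k) (m : Finset (Fin n)),
    m.card = t i ∧ ∀ x ∈ m, ∀ y ∈ m, x ≠ y → c s(x, y) = i

/-- The three-colour Ramsey number `R(t₁, t₂, t₃)`. -/
noncomputable def ramsey3 (t₁ t₂ t₃ : ℕ) : ℕ := sInf {n | RamseyProp n ![t₁, t₂, t₃]}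

theorem ramsey_exists {k : ℕ} (s : ℕ) : ∀ t : Fin k → ℕ, ∑ i, t i = s →
    ∃ N : ℕ, ∀ (n : ℕ) (c : Sym2 (Fin n) → Fin k) (A : Finset (Fin n)), N ≤ A.card → 
      ∃ (i : Fin k) (m : Finset (Fin n)), m ⊆ A ∧
      m.card = t i ∧ ∀ x ∈ m, ∀ y ∈ m, x ≠ y → c s(x, y) = i := by
  induction s with
  | zero =>
    intro t hs
    refine ⟨1, fun n c A hA => ?_⟩
    obtain ⟨v, hv⟩ := Finset.card_pos.1 hA
    refine ⟨c s(v, v), ∅, by simp, ?_, by simp⟩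
    have := (Finset.sum_eq_zero_iff.1 hs) (c s(v,v)) (Finset.mem_univ _)
    simp [this]
  | succ s ih =>
    intro t hs
    by_cases h0 : ∃ i, t i = 0
    · obtain ⟨i, hi⟩ := h0
      exact ⟨0, fun n c A hA => ⟨i, ∅, by simp, by simp [hi], by simp⟩⟩
    push Not at h0
    have step : ∀ i, ∑ j, Function.update t i (t i - 1) j = s := by
      intro i
      have h1 := Finset.add_sum_erase Finset.univ t (Finset.mem_univ i)
      rw [← Finset.add_sum_erase Finset.univ _ (Finset.mem_univ i)]
      have h2 : ∑ j ∈ Finset.univ.erase i, Function.update t i (t i - 1) j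
          = ∑ j ∈ Finset.univ.erase i, t j := by
        apply Finset.sum_congr rfl
        intro j hj
        rw [Function.update_of_ne (Finset.ne_of_mem_erase hj)]
      rw [h2, Function.update_self]
      have := h0 i
      omega
    choose N hN using fun i => ih _ (step i)
    refine ⟨1 + ∑ i, N i, fun n c A hA => ?_⟩
    obtain ⟨v, hv⟩ := Finset.card_pos.1 (show 0 < A.card by omega)
    have hpig : ∃ i, N i ≤ ((A.erase v).filter (fun w => c s(v, w) = i)).card := by
      by_contra hcon
      push Not at hcon
      have h1 := Finset.card_eq_sum_card_fiberwise (s := A.erase v) (t := Finset.univ)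
        (f := fun w => c s(v, w)) (fun _ _ => by simp)
      have h2 := Finset.card_erase_of_mem hv
      have h3 : ∑ i, ((A.erase v).filter (fun w => c s(v, w) = i)).card < ∑ i, N i :=
        Finset.sum_lt_sum_of_nonempty ⟨c s(v, v), Finset.mem_univ _⟩ (fun i _ => hcon i)
      omega
    obtain ⟨i, hi⟩ := hpig
    obtain ⟨j, m, hmA, hmc, hm⟩ := hN i n c _ hi
    by_cases hji : j = i
    · subst hji
      rw [Function.update_self] at hmc
      have hvm : v ∉ m := fun h => by simpa using hmA h
      refine ⟨j, insert v m, ?_, ?_, ?_⟩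
      · intro w hw
        rcases Finset.mem_insert.1 hw with rfl | hw
        · exact hv
        · have := hmA hw
          simp at this
          exact this.1.2
      · rw [Finset.card_insert_of_notMem hvm]
        have := h0 j
        omega
      · intro p hp q hq hpq
        rcases Finset.mem_insert.1 hp with rfl | hp1 <;> rcases Finset.mem_insert.1 hq with rfl | hq1
        · exact absurd rfl hpq
        · exact (Finset.mem_filter.1 (hmA hq1)).2
        · rw [Sym2.eq_swap]
          exact (Finset.mem_filter.1 (hmA hp1)).2
        · exact hm p hp1 q hq1 hpq
    · rw [Function.update_of_ne hji] at hmc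
      refine ⟨j, m, ?_, hmc, hm⟩
      intro w hw
      have := hmA hw
      simp at this
      exact this.1.2

theorem ramsey3_spec (t₁ t₂ t₃ : ℕ) :
    RamseyProp (ramsey3 t₁ t₂ t₃) ![t₁, t₂, t₃] := by
  have : {n | RamseyProp n ![t₁, t₂, t₃]}.Nonempty := by
    obtain ⟨N, hN⟩ := ramsey_exists _ ![t₁, t₂, t₃] rfl
    refine ⟨N, fun c => ?_⟩
    obtain ⟨i, m, -, h⟩ := hN N c Finset.univ (by simp)
    exact ⟨i, m, h⟩
  exact Nat.sInf_mem this

/-- half graph patterns contain an induced complete bipartite graph -/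
theorem no_half {V : Type} (G : SimpleGraph V) (t n : ℕ)
    (hfree : IsEmpty (completeBipartiteGraph (Fin t) (Fin t) ↪g G))
    (a b : Fin n → V) (ha : Function.Injective a) (hb : Function.Injective b)
    (haa : ∀ i j, ¬ G.Adj (a i) (a j)) (hbb : ∀ i j, ¬ G.Adj (b i) (b j))
    (m : Finset (Fin n)) (hm : m.card = 2 * t)
    (h : ∀ i ∈ m, ∀ j ∈ m, i < j → G.Adj (a i) (b j)) : False := by
  let e := m.orderEmbOfFin hm
  have he : ∀ i, e i ∈ m := fun i => Finset.orderEmbOfFin_mem m hm i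
  let p : Fin t → Fin n := fun i => e ⟨i, by omega⟩
  let q : Fin t → Fin n := fun i => e ⟨t + i, by omega⟩
  have hpq : ∀ i j, G.Adj (a (p i)) (b (q j)) := fun i j =>
    h _ (he _) _ (he _) (e.strictMono (by rw [Fin.lt_def]; simp; omega))
  have hp : Function.Injective p := fun i j hij => by
    have := e.injective hij
    simp at this; omega
  have hq : Function.Injective q := fun i j hij => by
    have := e.injective hij
    simp at this; omega
  refine hfree.false ⟨⟨Sum.elim (a ∘ p) (b ∘ q), ?_⟩, ?_⟩
  · rintro (i | i) (j | j) hij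
    · simpa using hp (ha hij)
    · have := hpq i j
      simp only [Sum.elim_inl, Sum.elim_inr, Function.comp] at hij
      rw [hij] at this; exact absurd this (G.loopless.irrefl _)
    · have := hpq j i
      simp only [Sum.elim_inl, Sum.elim_inr, Function.comp] at hij
      rw [hij] at this; exact absurd this (G.loopless.irrefl _)
    · simpa using hq (hb hij)
  · rintro (i | i) (j | j)
    · exact iff_of_false (haa (p i) (p j)) (by simp)
    · exact iff_of_true (hpq i j) (by simp)
    · exact iff_of_true (hpq j i).symm (by simp)
    · exact iff_of_false (hbb (q i) (q j)) (by simp)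

theorem hall_match {V : Type} [Fintype V] (G : SimpleGraph V)
    (S : Finset V) (hSind : ((S : Set V)).Pairwise fun u v => ¬ G.Adj u v)
    (hSmax : ∀ I : Finset V, ((I : Set V)).Pairwise (fun u v => ¬ G.Adj u v) →
      I.card ≤ S.card)
    (I : Finset V) (hI : ∀ v ∈ I, v ∉ S)
    (hIind : ((I : Set V)).Pairwise fun u v => ¬ G.Adj u v) :
    ∃ f : I → V, Function.Injective f ∧ ∀ v, f v ∈ S ∧ G.Adj v (f v) := by
  classical
  have key := (Finset.all_card_le_biUnion_card_iff_exists_injective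
    (fun v : I => S.filter (fun w => G.Adj v w))).1 ?_
  · obtain ⟨f, hf, h⟩ := key
    exact ⟨f, hf, fun v => by simpa using h v⟩
  · intro A
    set B := A.biUnion (fun v : I => S.filter (fun w => G.Adj v w)) with hB
    let A' : Finset V := A.map (Function.Embedding.subtype _)
    have hA' : ∀ v ∈ A', ∃ h : v ∈ I, (⟨v, h⟩ : I) ∈ A := by
      intro v hv
      simpa [A'] using hv
    have hcross : ∀ v ∈ A', ∀ w ∈ S \ B, ¬ G.Adj v w := by
      intro v hv w hw hvw
      obtain ⟨h, hA⟩ := hA' v hv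
      rw [Finset.mem_sdiff] at hw
      apply hw.2
      rw [hB, Finset.mem_biUnion]
      exact ⟨_, hA, Finset.mem_filter.2 ⟨hw.1, hvw⟩⟩
    have h1 := hSmax (A' ∪ (S \ B)) (by
      intro u hu v hv huv
      rcases Finset.mem_union.1 hu with hu | hu <;> rcases Finset.mem_union.1 hv with hv | hv
      · exact hIind (hA' u hu).1 (hA' v hv).1 huv
      · exact hcross u hu v hv
      · exact fun h => hcross v hv u hu h.symm
      · exact hSind (Finset.mem_sdiff.1 hu).1 (Finset.mem_sdiff.1 hv).1 huv)
    have hdis : Disjoint A' (S \ B) := by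
      rw [Finset.disjoint_left]
      intro v hv hv2
      exact hI v (hA' v hv).1 (Finset.mem_sdiff.1 hv2).1
    have hBS : B ⊆ S := by
      rw [hB]
      exact Finset.biUnion_subset.2 fun v _ => Finset.filter_subset _ _
    rw [Finset.card_union_of_disjoint hdis, Finset.card_map] at h1
    have h2 := Finset.card_sdiff_add_card_eq_card hBS
    omega

/-- Let `G` be a finite `K_{t,t}`-free graph, `(T, β)` a tree decomposition with
`μ(T,β) ≤ μ`, and `S` a maximum independent set of `G`. Then every independent set
contained in `β(x) \ S` has size strictly less than `R(2t, 2t, μ+1)`. -/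
theorem stmt6 (μ t : ℕ) (hμ : 0 < μ) (ht : 0 < t) (V : Type) [Fintype V]
    (G : SimpleGraph V)
    (hfree : IsEmpty (completeBipartiteGraph (Fin t) (Fin t) ↪g G))
    (td : TreeDecomp G) (htd : td.MuLE μ)
    (S : Finset V) (hSind : ((S : Set V)).Pairwise fun u v => ¬ G.Adj u v)
    (hSmax : ∀ I : Finset V, ((I : Set V)).Pairwise (fun u v => ¬ G.Adj u v) →
      I.card ≤ S.card)
    (x : td.ι) (I : Finset V) (hI : ↑I ⊆ td.bag x \ ↑S)
    (hIind : ((I : Set V)).Pairwise fun u v => ¬ G.Adj u v) :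
    I.card < ramsey3 (2 * t) (2 * t) (μ + 1) := by
  classical
  by_contra hcon
  push Not at hcon
  set n := ramsey3 (2 * t) (2 * t) (μ + 1) with hn
  obtain ⟨f, hf, hfS⟩ := hall_match G S hSind hSmax I (fun v hv => (hI hv).2) hIind
  let g : Fin n ↪ I := (Fin.castLEEmb hcon).trans I.equivFin.symm.toEmbedding
  let a : Fin n → V := fun i => g i
  let b : Fin n → V := fun i => f (g i)
  have ha : Function.Injective a := fun i j h => g.injective (Subtype.ext h)
  have hb : Function.Injective b := fun i j h => g.injective (hf h)
  have haI : ∀ i, a i ∈ I := fun i => (g i).2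
  have hbS : ∀ i, b i ∈ S := fun i => (hfS (g i)).1
  have hab : ∀ i, G.Adj (a i) (b i) := fun i => (hfS (g i)).2
  have haa : ∀ i j, ¬ G.Adj (a i) (a j) := fun i j h => hIind (haI i) (haI j) h.ne h
  have hbb : ∀ i j, ¬ G.Adj (b i) (b j) := fun i j h => hSind (hbS i) (hbS j) h.ne h
  have hne : ∀ i j, a i ≠ b j := fun i j h => (hI (haI i)).2 (h ▸ hbS j)
  let c : Sym2 (Fin n) → Fin 3 := fun z =>
    if G.Adj (a z.inf) (b z.sup) then 0 else if G.Adj (b z.inf) (a z.sup) then 1 else 2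
  have hc : ∀ i j, i < j → c s(i, j) =
      if G.Adj (a i) (b j) then 0 else if G.Adj (b i) (a j) then 1 else 2 := by
    intro i j hij
    simp only [c, Sym2.inf_mk, Sym2.sup_mk, inf_eq_left.2 hij.le, sup_eq_right.2 hij.le]
  obtain ⟨col, m, hmc, hm⟩ := ramsey3_spec (2 * t) (2 * t) (μ + 1) c
  have hm' : ∀ i ∈ m, ∀ j ∈ m, i < j →
      (if G.Adj (a i) (b j) then 0 else if G.Adj (b i) (a j) then 1 else 2) = col :=
    fun i hi j hj hij => (hc i j hij).symm.trans (hm i hi j hj hij.ne)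
  fin_cases col
  · refine no_half G t n hfree a b ha hb haa hbb m hmc fun i hi j hj hij => ?_
    have := hm' i hi j hj hij
    by_contra h
    rw [if_neg h] at this
    split_ifs at this <;> simp at this
  · refine no_half G t n hfree b a hb ha hbb haa m hmc fun i hi j hj hij => ?_
    have := hm' i hi j hj hij
    by_contra h
    rw [if_neg h] at this
    split_ifs at this <;> simp at this
  · have hmc' : m.card = μ + 1 := hmc
    have h2 : ∀ i ∈ m, ∀ j ∈ m, i < j → ¬ G.Adj (a i) (b j) ∧ ¬ G.Adj (b i) (a j) := by
      intro i hi j hj hij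
      have := hm' i hi j hj hij
      split_ifs at this with h3 h4
      · simp at this
      · simp at this
      · exact ⟨h3, h4⟩
    have h3 : ∀ i ∈ m, ∀ j ∈ m, i ≠ j → ¬ G.Adj (a i) (b j) := by
      intro i hi j hj hij
      rcases lt_or_gt_of_ne hij with h | h
      · exact (h2 i hi j hj h).1
      · exact fun h' => (h2 j hj i hi h).2 h'.symm
    let e := m.orderEmbOfFin hmc'
    have he : ∀ i, e i ∈ m := fun i => Finset.orderEmbOfFin_mem m hmc' i
    have := htd x (μ + 1) (a ∘ e) (b ∘ e) ⟨fun i => hab _, fun i j hij => ?_⟩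
      (fun i => Or.inl (hI (haI _)).1)
    · omega
    · have hij' : e i ≠ e j := fun h => hij (e.injective h)
      exact ⟨fun h => hij' (ha h), hne _ _, (hne _ _).symm, fun h => hij' (hb h), haa _ _,
        h3 _ (he _) _ (he _) hij', fun h => h3 _ (he _) _ (he _) hij'.symm h.symm, hbb _ _⟩
end
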